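/- Let S be a finite set of natural numbers and let m = ∑_{j ∈ S} 2^j. Then the multinomial coefficient m! / ∏_{j ∈ S} (2^j)! is odd. -/

import Mathlib

theorem odd_choose_two_pow_add (a : ℕ) : ∀ t : ℕ, t < 2 ^ a → Odd ((2 ^ a + t).choose (2 ^ a)) := by
  induction a with
  | zero =>
    intro t ht
    have : t = 0 := by simpa using ht
    subst this
    simp
  | succ a ih =>
    intro t ht
    have : Fact (Nat.Prime 2) := ⟨Nat.prime_two⟩
    have h := Choose.choose_modEq_choose_mod_mul_choose_div_nat
      (n := 2 ^ (a + 1) + t) (k := 2 ^ (a + 1)) (p := 2)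
    have hp : 2 ^ (a + 1) = 2 * 2 ^ a := by ring
    have h1 : 2 ^ (a + 1) % 2 = 0 := by omega
    have h2 : 2 ^ (a + 1) / 2 = 2 ^ a := by omega
    have h3 : (2 ^ (a + 1) + t) / 2 = 2 ^ a + t / 2 := by omega
    rw [h1, h2, h3, Nat.choose_zero_right, one_mul] at h
    have h4 := ih (t / 2) (by omega)
    rw [Nat.odd_iff] at h4 ⊢
    exact Eq.trans h h4

/-- For a finite set `S` of natural numbers, the multinomial coefficient
`(∑_{j ∈ S} 2 ^ j)! / ∏_{j ∈ S} (2 ^ j)!` is odd. -/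
theorem stmt_9 (S : Finset ℕ) : Odd (Nat.multinomial S fun j => 2 ^ j) := by
  induction S using Finset.induction_on_max with
  | empty => simp
  | insert a s hs ih =>
    rw [Nat.multinomial_insert (fun h => lt_irrefl _ (hs a h))]
    exact (odd_choose_two_pow_add a _ (Nat.geomSum_lt le_rfl hs)).mul ih
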